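/- (Image characterization underlying Proposition 1) Let m and k be positive integers and set n = 2^m. The image of the combinatorial gate over unconstrained weights and binary codes equals the set of k-sparse probability vectors: { q(α,Z) : α ∈ ℝ^k, Z ∈ {0,1}^{k×m} } = { w ∈ ℝ^n : w is in the probability simplex and ‖w‖₀ ≤ k }. -/

import Mathlib

/-!
On a binary code `z` the selector is the indicator of the one index whose bits are `z`
(`selector_bitCode`, `exists_bitCode`). Hence a gate with binary codes is a pushforward of the
softmax weights along a map `a : Fin k → Fin (2 ^ m)` (`gate_bitCode`), and such a pushforward is a
probability vector supported on the range of `a`, which has at most `k` elements.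

Conversely, the support `S` of a `k`-sparse probability vector `w` is nonempty with at most `k`
elements, so some `a : Fin k → Fin (2 ^ m)` has range exactly `S`. Splitting each mass `w i` equally
among the slots `t` with `a t = i` gives strictly positive slot weights of total mass `1`, and their
logarithms are softmax parameters producing exactly these weights (`softmax_log`). The equal
splitting is what deals with `‖w‖₀ < k`, since a softmax weight is never zero.
-/

/-- The single expert selector: for `i : Fin (2^m)` (0-indexed, corresponding to the
paper's 1-indexed expert `i+1`), `r(z)_i = ∏_{j ∈ B(i)} z_j · ∏_{j ∉ B(i)} (1 - z_j)`,
where `B(i)` is the set of (0-indexed) nonzero bits of `i`. -/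
def selector (m : ℕ) (z : Fin m → ℝ) (i : Fin (2 ^ m)) : ℝ :=
  ∏ j : Fin m, if Nat.testBit i.val j.val then z j else 1 - z j

/-- The softmax function `σ(α)_i = exp(α_i) / ∑_j exp(α_j)`. -/
noncomputable def softmax {k : ℕ} (α : Fin k → ℝ) (i : Fin k) : ℝ :=
  Real.exp (α i) / ∑ j : Fin k, Real.exp (α j)

/-- The combinatorial gate `q(α, Z) = ∑_{i=1}^k σ(α)_i · r(z^{(i)})`. -/
noncomputable def gate (m k : ℕ) (α : Fin k → ℝ) (Z : Fin k → Fin m → ℝ)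
    (i : Fin (2 ^ m)) : ℝ :=
  ∑ t : Fin k, softmax α t * selector m (Z t) i

/-- `‖w‖₀`: the number of nonzero entries of `w`. -/
noncomputable def norm0 {n : ℕ} (w : Fin n → ℝ) : ℕ :=
  (Finset.univ.filter fun i => w i ≠ 0).card

/-- The binary expansion of the index `a`, as a `{0,1}`-valued real vector. -/
def bitCode (m : ℕ) (a : Fin (2 ^ m)) (j : Fin m) : ℝ :=
  if Nat.testBit a.val j.val then 1 else 0

theorem selector_bitCode (m : ℕ) (a i : Fin (2 ^ m)) :
    selector m (bitCode m a) i = if a = i then 1 else 0 := by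
  unfold selector bitCode
  split_ifs with h
  · subst h
    apply Finset.prod_eq_one
    intro j _
    split_ifs <;> simp
  · -- Distinct indices below `2 ^ m` differ in some bit `j < m`, where the factor vanishes.
    obtain ⟨j, hj⟩ : ∃ j : Fin m, Nat.testBit a.val j.val ≠ Nat.testBit i.val j.val := by
      by_contra! hall
      apply h
      apply Fin.ext
      apply Nat.eq_of_testBit_eq
      intro j
      by_cases hjm : j < m
      · exact hall ⟨j, hjm⟩
      · have hpow : 2 ^ m ≤ 2 ^ j := Nat.pow_le_pow_right (by norm_num) (by omega)
        rw [Nat.testBit_lt_two_pow (lt_of_lt_of_le a.isLt hpow),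
          Nat.testBit_lt_two_pow (lt_of_lt_of_le i.isLt hpow)]
    apply Finset.prod_eq_zero (Finset.mem_univ j)
    cases ha : Nat.testBit a.val j.val <;> cases hi : Nat.testBit i.val j.val <;> simp_all

theorem exists_bitCode {m : ℕ} (z : Fin m → ℝ) (hz : ∀ j, z j = 0 ∨ z j = 1) :
    ∃ a : Fin (2 ^ m), z = bitCode m a := by
  classical
  refine ⟨⟨Nat.ofBits fun j => decide (z j = 1), Nat.ofBits_lt_two_pow _⟩, ?_⟩
  funext j
  rcases hz j with h | h <;> simp [bitCode, Nat.testBit_ofBits_lt _ _ j.isLt, h]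

/-- A gate with binary codes is the pushforward of the softmax weights along the indices that
the codes encode. -/
theorem gate_bitCode (m k : ℕ) (α : Fin k → ℝ) (a : Fin k → Fin (2 ^ m)) (i : Fin (2 ^ m)) :
    gate m k α (fun t => bitCode m (a t)) i = ∑ t, if a t = i then softmax α t else 0 := by
  simp [gate, selector_bitCode]

theorem softmax_nonneg {k : ℕ} (α : Fin k → ℝ) (t : Fin k) : 0 ≤ softmax α t := by
  unfold softmax
  positivity

theorem sum_softmax {k : ℕ} (hk : 0 < k) (α : Fin k → ℝ) : ∑ t, softmax α t = 1 := by
  have : Nonempty (Fin k) := ⟨⟨0, hk⟩⟩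
  unfold softmax
  rw [← Finset.sum_div]
  exact div_self (Finset.sum_pos (fun t _ => Real.exp_pos _) Finset.univ_nonempty).ne'

/-- Every strictly positive probability vector is a softmax, with its logarithms as parameters. -/
theorem softmax_log {k : ℕ} (v : Fin k → ℝ) (hv : ∀ t, 0 < v t) (hsum : ∑ t, v t = 1) :
    softmax (fun t => Real.log (v t)) = v := by
  funext t
  simp [softmax, Real.exp_log (hv _), hsum]

/-- A nonempty set with at most `k` elements is the range of a map from `Fin k`. -/
theorem exists_map_mem_iff {ι : Type*} {k : ℕ} (S : Finset ι) (hne : S.Nonempty)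
    (hS : S.card ≤ k) : ∃ a : Fin k → ι, ∀ i, i ∈ S ↔ ∃ t, a t = i := by
  obtain ⟨e⟩ : Nonempty (S ↪ Fin k) :=
    Function.Embedding.nonempty_of_card_le (by simpa using hS)
  have : Nonempty S := hne.to_subtype
  refine ⟨fun t => (Function.invFun e t : S), fun i => ⟨fun hi => ⟨e ⟨i, hi⟩, ?_⟩, ?_⟩⟩
  · exact congrArg Subtype.val (Function.leftInverse_invFun e.injective ⟨i, hi⟩)
  · rintro ⟨t, rfl⟩
    exact (Function.invFun e t).2

/-- image characterization underlying Proposition 1: the image of the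
combinatorial gate over unconstrained weights and binary codes equals the set of
`k`-sparse probability vectors in `ℝ^(2^m)`. -/
theorem gate_image_eq_sparse_simplex (m k : ℕ) (hm : 0 < m) (hk : 0 < k) :
    {w : Fin (2 ^ m) → ℝ |
        ∃ (α : Fin k → ℝ) (Z : Fin k → Fin m → ℝ),
          (∀ i j, Z i j = 0 ∨ Z i j = 1) ∧ gate m k α Z = w} =
      {w : Fin (2 ^ m) → ℝ |
        (∀ i, 0 ≤ w i) ∧ ∑ i : Fin (2 ^ m), w i = 1 ∧ norm0 w ≤ k} := by
  ext w
  simp only [Set.mem_ofPred_eq]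
  constructor
  · rintro ⟨α, Z, hZ, rfl⟩
    choose a ha using fun t => exists_bitCode (Z t) (hZ t)
    obtain rfl : Z = fun t => bitCode m (a t) := funext ha
    refine ⟨fun i => ?_, ?_, ?_⟩
    · rw [gate_bitCode]
      refine Finset.sum_nonneg fun t _ => ?_
      split_ifs
      exacts [softmax_nonneg α t, le_rfl]
    · simp only [gate_bitCode]
      rw [Finset.sum_comm]
      simpa using sum_softmax hk α
    · have hsub : (Finset.univ.filter fun i => gate m k α (fun t => bitCode m (a t)) i ≠ 0) ⊆
          Finset.univ.image a := by
        intro i hi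
        by_contra hnot
        refine (Finset.mem_filter.mp hi).2 ?_
        rw [gate_bitCode]
        refine Finset.sum_eq_zero fun t _ => if_neg fun h => hnot ?_
        exact h ▸ Finset.mem_image_of_mem a (Finset.mem_univ t)
      calc norm0 _ ≤ (Finset.univ.image a).card := Finset.card_le_card hsub
        _ ≤ (Finset.univ : Finset (Fin k)).card := Finset.card_image_le
        _ = k := by simp
  · rintro ⟨hnonneg, hsum, hcard⟩
    have hne : (Finset.univ.filter fun i => w i ≠ 0).Nonempty := by
      by_contra hempty
      have hzero : ∀ i, w i = 0 := by
        simpa [Finset.filter_eq_empty_iff] using hempty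
      simp [hzero] at hsum
    obtain ⟨a, ha⟩ := exists_map_mem_iff _ hne hcard
    simp only [Finset.mem_filter, Finset.mem_univ, true_and] at ha
    -- `c i` counts the slots sent to `i`, and `v` splits each mass equally among its slots.
    let c : Fin (2 ^ m) → ℕ := fun i => (Finset.univ.filter fun t => a t = i).card
    let v : Fin k → ℝ := fun t => w (a t) / c (a t)
    have hpush : ∀ i, (∑ t, if a t = i then v t else 0) = w i := by
      intro i
      have hconst : ∀ t, (if a t = i then v t else 0) = if a t = i then w i / c i else 0 := by
        intro t
        split_ifs with h
        · rw [← h]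
        · rfl
      rw [Finset.sum_congr rfl fun t _ => hconst t, ← Finset.sum_filter, Finset.sum_const,
        nsmul_eq_mul]
      by_cases hi : w i = 0
      · simp [hi]
      · obtain ⟨t, ht⟩ := (ha i).mp hi
        have hc : (c i : ℝ) ≠ 0 := by
          exact_mod_cast (Finset.card_pos.mpr ⟨t, by simpa using ht⟩).ne'
        exact mul_div_cancel₀ (w i) hc
    have hvpos : ∀ t, 0 < v t := by
      intro t
      have hw : 0 < w (a t) := lt_of_le_of_ne (hnonneg _) (Ne.symm ((ha _).mpr ⟨t, rfl⟩))
      have hc : 0 < c (a t) := Finset.card_pos.mpr ⟨t, by simp⟩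
      exact div_pos hw (by exact_mod_cast hc)
    have hvsum : ∑ t, v t = 1 := by
      rw [← hsum, ← Finset.sum_congr rfl fun i _ => hpush i, Finset.sum_comm]
      simp
    refine ⟨fun t => Real.log (v t), fun t => bitCode m (a t), fun t j => ?_, ?_⟩
    · simp only [bitCode]
      split_ifs <;> simp
    · funext i
      rw [gate_bitCode, softmax_log v hvpos hvsum, hpush]
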